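/- Let X be an edge-transitive simplicial surface, let f denote the number of orbits of Aut(X) on the faces X_2, and let s denote the order of the stabiliser in Aut(X) of an edge of X (this order is independent of the chosen edge). Then the pair (f, s) is one of (1,2), (1,4), (2,1), (2,2). -/

import Mathlib

open Finset

/-- A (connected) simplicial surface: a finite, downward-closed family of nonempty subsets of
the vertex set `α`, pure of dimension 2, such that every edge lies in exactly two faces,
the faces around each vertex form an umbrella, and the surface is connected. -/
structure SimplicialSurface (α : Type*) [Fintype α] [DecidableEq α] where
  cplx : Finset (Finset α)
  nonempty_of_mem : ∀ s ∈ cplx, s.Nonempty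
  down_closed : ∀ s ∈ cplx, ∀ t : Finset α, t.Nonempty → t ⊆ s → t ∈ cplx
  card_le_three : ∀ s ∈ cplx, s.card ≤ 3
  pure_two : ∀ s ∈ cplx, ∃ F ∈ cplx, s ⊆ F ∧ F.card = 3
  dim_two : ∃ F ∈ cplx, F.card = 3
  all_vertices : ∀ x : α, {x} ∈ cplx
  edge_in_two_faces : ∀ e ∈ cplx, e.card = 2 →
    (cplx.filter (fun F => e ⊆ F ∧ F.card = 3)).card = 2
  umbrella_exists : ∀ v : α, ∃ n : ℕ, 0 < n ∧ ∃ u : Fin n → Finset α,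
    Function.Injective u ∧
    (∀ i, u i ∈ cplx ∧ (u i).card = 3 ∧ v ∈ u i) ∧
    (∀ F ∈ cplx, F.card = 3 → v ∈ F → ∃ i, u i = F) ∧
    (∀ i : Fin n, (u i ∩ u (finRotate n i)).card = 2)
  connected : ∀ F ∈ cplx, ∀ G ∈ cplx, F.card = 3 → G.card = 3 →
    Relation.ReflTransGen (fun A B => A ∈ cplx ∧ B ∈ cplx ∧ (A ∩ B).card = 2) F G

lemma Equiv.Perm.finset_image_mul {α : Type*} [DecidableEq α] (π σ : Equiv.Perm α)
    (s : Finset α) :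
    Finset.image ⇑(π * σ) s = Finset.image ⇑π (Finset.image ⇑σ s) := by
  rw [Finset.image_image]
  rfl

namespace SimplicialSurface

variable {α : Type*} [Fintype α] [DecidableEq α] (X : SimplicialSurface α)

/-- The set `X_2` of faces of `X`, i.e. the 3-element members. -/
def faces : Finset (Finset α) := X.cplx.filter fun s => s.card = 3

/-- The set `X_1` of edges of `X`, i.e. the 2-element members. -/
def edges : Finset (Finset α) := X.cplx.filter fun s => s.card = 2

/-- The automorphism group of `X`: permutations of the vertices mapping members of the
complex to members of the complex. -/
def aut : Subgroup (Equiv.Perm α) where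
  carrier := { π | ∀ s : Finset α, s ∈ X.cplx ↔ Finset.image ⇑π s ∈ X.cplx }
  one_mem' := by intro s; simp
  mul_mem' := by
    intro π σ hπ hσ s
    rw [Equiv.Perm.finset_image_mul, ← hπ (Finset.image ⇑σ s), ← hσ s]
  inv_mem' := by
    intro π hπ s
    have h2 : Finset.image ⇑π (Finset.image ⇑π⁻¹ s) = s := by ext x; simp
    have h := hπ (Finset.image ⇑π⁻¹ s)
    rw [h2] at h
    exact h.symm

/-- The setwise stabiliser in `Aut(X)` of a set `s` of vertices. -/
def stab (s : Finset α) : Subgroup (Equiv.Perm α) where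
  carrier := { π | π ∈ X.aut ∧ Finset.image ⇑π s = s }
  one_mem' := ⟨X.aut.one_mem, by simp⟩
  mul_mem' := by
    rintro π σ ⟨hπ, hπs⟩ ⟨hσ, hσs⟩
    exact ⟨X.aut.mul_mem hπ hσ, by rw [Equiv.Perm.finset_image_mul, hσs, hπs]⟩
  inv_mem' := by
    rintro π ⟨hπ, hπs⟩
    refine ⟨X.aut.inv_mem hπ, ?_⟩
    calc Finset.image ⇑π⁻¹ s = Finset.image ⇑π⁻¹ (Finset.image ⇑π s) := by rw [hπs]
      _ = s := by ext x; simp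

/-- `X` is edge-transitive if `Aut(X)` acts transitively on the edges `X_1`. -/
def EdgeTransitive : Prop :=
  ∀ e₁ ∈ X.edges, ∀ e₂ ∈ X.edges, ∃ π ∈ X.aut, Finset.image ⇑π e₁ = e₂

/-- The orbit of a set of vertices under `Aut(X)`. -/
def orbit (s : Finset α) : Set (Finset α) := { t | ∃ π ∈ X.aut, Finset.image ⇑π s = t }

/-- The set of `Aut(X)`-orbits on the faces of `X`. -/
def faceOrbits : Set (Set (Finset α)) := { O | ∃ F ∈ X.faces, O = X.orbit F }

/-- The set of `Aut(X)`-orbits on the vertices of `X`. -/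
def vertexOrbits : Set (Set α) := { O | ∃ v : α, O = { w | ∃ π ∈ X.aut, π v = w } }

/-- The degree of a vertex: the number of faces containing it. -/
def degree (v : α) : ℕ := (X.faces.filter fun F => v ∈ F).card

end SimplicialSurface

/-!
Write `f` for the number of face orbits and `s` for the order of the stabiliser of the edge `e`. An
automorphism fixing a face pointwise fixes the faces adjacent to it pointwise, hence is trivial by
connectedness. So an automorphism stabilising both `e` and a face containing `e` is determined by
its action on the two ends of `e`, and the stabiliser of such a flag has order at most two. Since
`e` lies in just two faces, `s` divides `4`, and by edge-transitivity `f ≤ 2`. If `f = 2`, the two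
faces at `e` lie in different orbits, so the stabiliser of `e` is a flag stabiliser and `s` divides
`2`. If `f = 1`, the orbit-stabiliser theorem gives `|X₁| s = |Aut X| = |X₂| t`, where `t` is the
order of a face stabiliser, and `2 |X₁| = 3 |X₂|` turns this into `3 s = 2 t`, so `s` is even.
-/

section General

variable {β : Type*} {s t : Finset β}

lemma forall_mem_fixed_of_card_le_succ {f : β → β} (hf : Function.Injective f) (hst : s ⊆ t)
    (hcard : #t ≤ #s + 1) (hmaps : ∀ x ∈ t, f x ∈ t) (hfix : ∀ x ∈ s, f x = x) :
    ∀ x ∈ t, f x = x := by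
  classical
  intro x hx
  by_contra hne
  have hxs : x ∉ s := fun h => hne (hfix x h)
  have hfxs : f x ∉ s := fun h => hne (hf (hfix _ h))
  have hle : #(t \ s) ≤ 1 := by
    rw [card_sdiff_of_subset hst]
    omega
  exact hne (card_le_one.1 hle _ (mem_sdiff.2 ⟨hmaps x hx, hfxs⟩) _ (mem_sdiff.2 ⟨hx, hxs⟩))

variable {G : Type*} [Group G] [MulAction G β]

lemma card_eq_ncard_orbit_mul_card_inf_stabilizer (H : Subgroup G) (x : β) :
    Nat.card H =
      (MulAction.orbit H x).ncard * Nat.card ↥(H ⊓ MulAction.stabilizer G x) := by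
  have hstab : MulAction.stabilizer H x = (H ⊓ MulAction.stabilizer G x).subgroupOf H := by
    rw [Subgroup.inf_subgroupOf_left]
    rfl
  rw [← MulAction.index_stabilizer, hstab, mul_comm,
    ← Nat.card_congr (Subgroup.subgroupOfEquivOfLe inf_le_left).toEquiv, Subgroup.card_mul_index]

lemma ncard_orbit_dvd_two {x : β} (ht : #t = 2) (h : MulAction.orbit G x ⊆ t) :
    (MulAction.orbit G x).ncard ∣ 2 := by
  have hle : (MulAction.orbit G x).ncard ≤ 2 := by
    simpa [ht] using Set.ncard_le_ncard h
  have hpos : 0 < (MulAction.orbit G x).ncard :=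
    (Set.ncard_pos (t.finite_toSet.subset h)).2 (MulAction.nonempty_orbit x)
  interval_cases (MulAction.orbit G x).ncard <;> decide

end General

namespace SimplicialSurface

open Equiv (Perm)
open scoped Pointwise

variable {α : Type*} [Fintype α] [DecidableEq α] {X : SimplicialSurface α}
  {σ : Perm α} {e F F' : Finset α}

lemma mem_faces : F ∈ X.faces ↔ F ∈ X.cplx ∧ #F = 3 := mem_filter

lemma mem_edges : e ∈ X.edges ↔ e ∈ X.cplx ∧ #e = 2 := mem_filter

lemma mem_edges_of_subset_face (hF : F ∈ X.faces) (heF : e ⊆ F) (he : #e = 2) : e ∈ X.edges :=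
  mem_edges.2 ⟨X.down_closed F (mem_faces.1 hF).1 e (card_pos.1 (by omega)) heF, he⟩

lemma image_mem_faces (hσ : σ ∈ X.aut) (hF : F ∈ X.faces) : F.image σ ∈ X.faces :=
  mem_faces.2 ⟨(hσ F).1 (mem_faces.1 hF).1,
    (card_image_of_injective F σ.injective).trans (mem_faces.1 hF).2⟩

lemma image_mem_edges (hσ : σ ∈ X.aut) (he : e ∈ X.edges) : e.image σ ∈ X.edges :=
  mem_edges.2 ⟨(hσ e).1 (mem_edges.1 he).1,
    (card_image_of_injective e σ.injective).trans (mem_edges.1 he).2⟩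

variable (X) in
/-- The faces of `X` containing the vertex set `s`; an edge has exactly two of them. -/
def cofaces (s : Finset α) : Finset (Finset α) := X.faces.filter (s ⊆ ·)

lemma mem_cofaces {s : Finset α} : F ∈ X.cofaces s ↔ F ∈ X.faces ∧ s ⊆ F := mem_filter

lemma card_cofaces_edge (he : e ∈ X.edges) : #(X.cofaces e) = 2 := by
  rw [← X.edge_in_two_faces e (mem_edges.1 he).1 (mem_edges.1 he).2, cofaces, faces, filter_filter]
  simp only [and_comm]

lemma cofaces_edge_nonempty (he : e ∈ X.edges) : (X.cofaces e).Nonempty :=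
  card_pos.1 (card_cofaces_edge he ▸ two_pos)

lemma image_mem_cofaces {s : Finset α} (hσ : σ ∈ X.aut) (hF : F ∈ X.cofaces s) :
    F.image σ ∈ X.cofaces (s.image σ) :=
  mem_cofaces.2 ⟨image_mem_faces hσ (mem_cofaces.1 hF).1, image_subset_image (mem_cofaces.1 hF).2⟩

variable (X) in
lemma card_edges_mul_two_eq_card_faces_mul_three : #X.edges * 2 = #X.faces * 3 := by
  have card_above {e : Finset α} (he : e ∈ X.edges) : #(bipartiteAbove (· ⊆ ·) X.faces e) = 2 :=
    card_cofaces_edge he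
  refine card_mul_eq_card_mul (· ⊆ ·) (fun _ => card_above) fun F hF => ?_
  have hedges : bipartiteBelow (· ⊆ ·) X.edges F = powersetCard 2 F := by
    ext e
    rw [mem_bipartiteBelow, mem_powersetCard]
    exact ⟨fun h => ⟨h.2, (mem_edges.1 h.1).2⟩, fun h => ⟨mem_edges_of_subset_face hF h.1 h.2, h.1⟩⟩
  rw [hedges, card_powersetCard, (mem_faces.1 hF).2]
  rfl

lemma fixes_face_of_fixes_edge (he : e ∈ X.edges) (hF : F ∈ X.cofaces e)
    (hfix : ∀ x ∈ e, σ x = x) (hσF : F.image σ = F) : ∀ x ∈ F, σ x = x := by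
  obtain ⟨hF, heF⟩ := mem_cofaces.1 hF
  refine forall_mem_fixed_of_card_le_succ σ.injective heF ?_ ?_ hfix
  · rw [(mem_faces.1 hF).2, (mem_edges.1 he).2]
  · exact fun x hx => hσF ▸ mem_image_of_mem σ hx

lemma fixes_coface_of_fixes_coface (hσ : σ ∈ X.aut) (he : e ∈ X.edges) (hF : F ∈ X.cofaces e)
    (hfix : ∀ x ∈ F, σ x = x) (hF' : F' ∈ X.cofaces e) : ∀ x ∈ F', σ x = x := by
  have image_eq_self {s : Finset α} (hs : s ⊆ F) : s.image σ = s :=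
    (image_congr fun x hx => hfix x (hs hx)).trans image_id
  have heF : e ⊆ F := (mem_cofaces.1 hF).2
  have hσF' : F'.image σ = F' := by
    refine forall_mem_fixed_of_card_le_succ (s := {F}) (image_injective σ.injective)
      (singleton_subset_iff.2 hF) (by rw [card_cofaces_edge he, card_singleton]) ?_ ?_ F' hF'
    · exact fun C hC => image_eq_self heF ▸ image_mem_cofaces hσ hC
    · exact fun C hC => mem_singleton.1 hC ▸ image_eq_self subset_rfl
  exact fixes_face_of_fixes_edge he hF' (fun x hx => hfix x (heF hx)) hσF'

/-- The chains of `connected` may pass through edges as well as faces, so the property carried along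
a chain concerns all cofaces of its current member. -/
lemma fixes_all_faces_of_fixes_face (hσ : σ ∈ X.aut) (hF : F ∈ X.faces)
    (hfix : ∀ x ∈ F, σ x = x) (hF' : F' ∈ X.faces) : ∀ x ∈ F', σ x = x := by
  suffices ∀ H ∈ X.cofaces F', ∀ x ∈ H, σ x = x from this F' (mem_cofaces.2 ⟨hF', subset_rfl⟩)
  obtain ⟨hFX, hF3⟩ := mem_faces.1 hF
  have hchain := X.connected F hFX F' (mem_faces.1 hF').1 hF3 (mem_faces.1 hF').2
  clear hF'
  induction hchain with
  | refl =>
    intro H hH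
    obtain ⟨hH, hFH⟩ := mem_cofaces.1 hH
    rwa [← eq_of_subset_of_card_le hFH (by rw [hF3, (mem_faces.1 hH).2])]
  | @tail A B _ hAB ih =>
    obtain ⟨hA, -, hcard⟩ := hAB
    obtain ⟨H, hH, hAH, hH3⟩ := X.pure_two A hA
    have hHf : H ∈ X.faces := mem_faces.2 ⟨hH, hH3⟩
    have hABH : A ∩ B ⊆ H := inter_subset_left.trans hAH
    intro C hC
    obtain ⟨hCf, hBC⟩ := mem_cofaces.1 hC
    exact fixes_coface_of_fixes_coface hσ (mem_edges_of_subset_face hHf hABH hcard)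
      (mem_cofaces.2 ⟨hHf, hABH⟩) (ih H (mem_cofaces.2 ⟨hHf, hAH⟩))
      (mem_cofaces.2 ⟨hCf, inter_subset_right.trans hBC⟩)

theorem eq_one_of_fixes_face (hσ : σ ∈ X.aut) (hF : F ∈ X.faces) (hfix : ∀ x ∈ F, σ x = x) :
    σ = 1 := by
  ext x
  obtain ⟨F', hF', hxF', hF3'⟩ := X.pure_two {x} (X.all_vertices x)
  exact fixes_all_faces_of_fixes_face hσ hF hfix (mem_faces.2 ⟨hF', hF3'⟩) x
    (singleton_subset_iff.1 hxF')

lemma image_mem_cofaces_of_mem_stab (hσ : σ ∈ X.stab e) (hF : F ∈ X.cofaces e) :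
    F.image σ ∈ X.cofaces e := by
  simpa only [hσ.2] using image_mem_cofaces hσ.1 hF

lemma card_flag_stabilizer_dvd_two (he : e ∈ X.edges) (hF : F ∈ X.cofaces e) :
    Nat.card ↥(X.stab e ⊓ MulAction.stabilizer (Perm α) F) ∣ 2 := by
  obtain ⟨a, ha⟩ : e.Nonempty := X.nonempty_of_mem e (mem_edges.1 he).1
  have hcard : #e = 2 := (mem_edges.1 he).2
  have maps_edge {σ : Perm α} (hσ : σ ∈ X.stab e) : ∀ x ∈ e, σ x ∈ e :=
    fun x hx => hσ.2 ▸ mem_image_of_mem σ hx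
  have htriv :
      X.stab e ⊓ MulAction.stabilizer (Perm α) F ⊓ MulAction.stabilizer (Perm α) a = ⊥ := by
    refine (Subgroup.eq_bot_iff_forall _).2 fun σ ⟨⟨hσe, hσF⟩, hσa⟩ => ?_
    have hfix : ∀ x ∈ e, σ x = x :=
      forall_mem_fixed_of_card_le_succ (s := {a}) σ.injective (singleton_subset_iff.2 ha)
        (by rw [hcard, card_singleton]) (maps_edge hσe) (fun x hx => mem_singleton.1 hx ▸ hσa)
    exact eq_one_of_fixes_face hσe.1 (mem_cofaces.1 hF).1 (fixes_face_of_fixes_edge he hF hfix hσF)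
  rw [card_eq_ncard_orbit_mul_card_inf_stabilizer _ a, htriv, Subgroup.card_bot, mul_one]
  refine ncard_orbit_dvd_two hcard ?_
  rintro _ ⟨⟨σ, hσ⟩, rfl⟩
  exact maps_edge hσ.1 a ha

theorem card_stab_edge_dvd_four (he : e ∈ X.edges) : Nat.card (X.stab e) ∣ 4 := by
  obtain ⟨F, hF⟩ := cofaces_edge_nonempty he
  rw [card_eq_ncard_orbit_mul_card_inf_stabilizer (X.stab e) F]
  refine mul_dvd_mul (ncard_orbit_dvd_two (card_cofaces_edge he) ?_)
    (card_flag_stabilizer_dvd_two he hF)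
  rintro _ ⟨⟨σ, hσ⟩, rfl⟩
  exact image_mem_cofaces_of_mem_stab hσ hF

variable (X) in
lemma orbit_eq_mulAction_orbit (s : Finset α) : X.orbit s = MulAction.orbit X.aut s :=
  Set.ext fun _ => ⟨fun ⟨π, hπ, h⟩ => ⟨⟨π, hπ⟩, h⟩, fun ⟨⟨π, hπ⟩, h⟩ => ⟨π, hπ, h⟩⟩

variable (X) in
lemma card_aut_eq_ncard_orbit_mul_card_stab (s : Finset α) :
    Nat.card X.aut = (X.orbit s).ncard * Nat.card (X.stab s) := by
  rw [orbit_eq_mulAction_orbit]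
  exact card_eq_ncard_orbit_mul_card_inf_stabilizer X.aut s

lemma orbit_image (hσ : σ ∈ X.aut) (s : Finset α) : X.orbit (s.image σ) = X.orbit s := by
  rw [orbit_eq_mulAction_orbit, orbit_eq_mulAction_orbit]
  exact MulAction.orbit_smul (⟨σ, hσ⟩ : X.aut) s

lemma EdgeTransitive.orbit_eq_edges (hX : X.EdgeTransitive) (he : e ∈ X.edges) :
    X.orbit e = X.edges :=
  Set.Subset.antisymm (fun _ ⟨_, hπ, h⟩ => h ▸ image_mem_edges hπ he) fun e' he' => hX e he e' he'

lemma orbit_eq_faces_of_ncard_faceOrbits_eq_one (hf : X.faceOrbits.ncard = 1) (hF : F ∈ X.faces) :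
    X.orbit F = X.faces := by
  refine Set.Subset.antisymm (fun _ ⟨_, hπ, h⟩ => h ▸ image_mem_faces hπ hF) fun F' hF' => ?_
  obtain ⟨O, hO⟩ := Set.ncard_eq_one.1 hf
  have orbit_eq {C : Finset α} (hC : C ∈ X.faces) : X.orbit C = O :=
    Set.mem_singleton_iff.1 (hO ▸ ⟨C, hC, rfl⟩)
  rw [orbit_eq hF, ← orbit_eq hF']
  exact ⟨1, X.aut.one_mem, image_id⟩

lemma EdgeTransitive.faceOrbits_eq (hX : X.EdgeTransitive) (he : e ∈ X.edges) :
    X.faceOrbits = X.orbit '' X.cofaces e := by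
  ext O
  constructor
  · rintro ⟨F, hF, rfl⟩
    obtain ⟨e', he'F, he'⟩ := exists_subset_card_eq (s := F) (n := 2)
      (by rw [(mem_faces.1 hF).2]; decide)
    obtain ⟨π, hπ, rfl⟩ := hX e' (mem_edges_of_subset_face hF he'F he') e he
    exact ⟨F.image π, image_mem_cofaces hπ (mem_cofaces.2 ⟨hF, he'F⟩), orbit_image hπ F⟩
  · rintro ⟨F, hF, rfl⟩
    exact ⟨F, (mem_cofaces.1 hF).1, rfl⟩

lemma EdgeTransitive.ncard_faceOrbits (hX : X.EdgeTransitive) (he : e ∈ X.edges) :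
    X.faceOrbits.ncard = 1 ∨ X.faceOrbits.ncard = 2 := by
  obtain ⟨F₁, F₂, -, hcofaces⟩ := card_eq_two.1 (card_cofaces_edge he)
  rw [hX.faceOrbits_eq he, hcofaces, coe_pair, Set.image_pair]
  by_cases h : X.orbit F₁ = X.orbit F₂
  · left
    rw [h, Set.pair_eq_singleton, Set.ncard_singleton]
  · exact Or.inr (Set.ncard_pair h)

theorem EdgeTransitive.even_card_stab (hX : X.EdgeTransitive) (he : e ∈ X.edges)
    (hf : X.faceOrbits.ncard = 1) : Even (Nat.card (X.stab e)) := by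
  obtain ⟨F, hFX, hF3⟩ := X.dim_two
  have hF : F ∈ X.faces := mem_faces.2 ⟨hFX, hF3⟩
  have horbits : #X.edges * Nat.card (X.stab e) = #X.faces * Nat.card (X.stab F) := by
    have h := X.card_aut_eq_ncard_orbit_mul_card_stab e
    rwa [X.card_aut_eq_ncard_orbit_mul_card_stab F, hX.orbit_eq_edges he,
      orbit_eq_faces_of_ncard_faceOrbits_eq_one hf hF, Set.ncard_coe_finset,
      Set.ncard_coe_finset, eq_comm] at h
  have hratio : 3 * Nat.card (X.stab e) = 2 * Nat.card (X.stab F) := by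
    refine Nat.eq_of_mul_eq_mul_left (card_pos.2 ⟨e, he⟩) ?_
    calc #X.edges * (3 * Nat.card (X.stab e))
        = 3 * (#X.edges * Nat.card (X.stab e)) := by ring
      _ = #X.faces * 3 * Nat.card (X.stab F) := by rw [horbits]; ring
      _ = #X.edges * (2 * Nat.card (X.stab F)) := by
        rw [← X.card_edges_mul_two_eq_card_faces_mul_three, mul_assoc]
  rw [Nat.even_iff]
  omega

theorem EdgeTransitive.card_stab_dvd_two (hX : X.EdgeTransitive) (he : e ∈ X.edges)
    (hf : X.faceOrbits.ncard = 2) : Nat.card (X.stab e) ∣ 2 := by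
  have hinj : Set.InjOn X.orbit (X.cofaces e) := by
    refine Set.injOn_of_ncard_image_eq ?_
    rw [← hX.faceOrbits_eq he, hf, Set.ncard_coe_finset, card_cofaces_edge he]
  obtain ⟨F, hF⟩ := cofaces_edge_nonempty he
  have hle : X.stab e ≤ MulAction.stabilizer (Perm α) F := fun σ hσ =>
    hinj (image_mem_cofaces_of_mem_stab hσ hF) hF (orbit_image hσ.1 F)
  rw [← inf_eq_left.2 hle]
  exact card_flag_stabilizer_dvd_two he hF

end SimplicialSurface

/-- If `X` is an edge-transitive simplicial surface, `f` the number of `Aut(X)`-orbits on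
the faces, and `s` the order of the stabiliser in `Aut(X)` of any edge, then
`(f, s) ∈ {(1,2), (1,4), (2,1), (2,2)}`. -/
theorem face_edge_type_mem
    {α : Type*} [Fintype α] [DecidableEq α] (X : SimplicialSurface α)
    (hX : X.EdgeTransitive) (e : Finset α) (he : e ∈ X.edges) :
    (X.faceOrbits.ncard, Nat.card (X.stab e)) ∈
      ({(1, 2), (1, 4), (2, 1), (2, 2)} : Set (ℕ × ℕ)) := by
  rcases hX.ncard_faceOrbits he with hf | hf
  · have hdvd : Nat.card (X.stab e) ∣ 4 := X.card_stab_edge_dvd_four he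
    have heven : Even (Nat.card (X.stab e)) := hX.even_card_stab he hf
    have hle : Nat.card (X.stab e) ≤ 4 := Nat.le_of_dvd (by decide) hdvd
    rw [hf]
    interval_cases Nat.card (X.stab e) <;> simp_all +decide
  · rw [hf]
    rcases (Nat.dvd_prime Nat.prime_two).1 (hX.card_stab_dvd_two he hf) with hs | hs <;> simp [hs]
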